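/- Surface-order bounds for the corridor term: fix x > 0 and a subset C ⊆ B of bonds; let P_B denote the quenched pressure with all parameters equal to x on the bond set B, and P_{B∖C} the quenched pressure of the same sites with bond set B∖C (equivalently, with x_b = 0 for b ∈ C). Then (x²/2) |C| ≤ P_B − P_{B∖C} ≤ x² |C|; in particular the difference is nonnegative and grows at most and at least proportionally to |C|. -/

import Mathlib

open MeasureTheory ProbabilityTheory Filter

noncomputable section

/-- The real value ±1 of a Boolean spin. -/
def spin (s : Bool) : ℝ := if s then 1 else -1

/-- The bond spin `S_b = S_n S_{n'}` for a bond `b` with endpoints `ep b = (n, n')`. -/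
def bondSpin {V ι : Type*} (ep : ι → V × V) (S : V → Bool) (b : ι) : ℝ :=
  spin (S (ep b).1) * spin (S (ep b).2)

/-- The potential `U(j, S) = Σ_b x_b j_b S_b`. -/
def potential {V ι : Type*} [Fintype ι] (ep : ι → V × V) (x j : ι → ℝ)
    (S : V → Bool) : ℝ :=
  ∑ b, x b * j b * bondSpin ep S b

/-- The partition function `Z(j) = Σ_S exp U(j,S)`. -/
def partitionFn {V ι : Type*} [Fintype V] [DecidableEq V] [Fintype ι]
    (ep : ι → V × V) (x j : ι → ℝ) : ℝ :=
  ∑ S : V → Bool, Real.exp (potential ep x j S)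

/-- The Boltzmann–Gibbs expectation `⟨f⟩` at fixed disorder `j`. -/
def gibbs {V ι : Type*} [Fintype V] [DecidableEq V] [Fintype ι]
    (ep : ι → V × V) (x j : ι → ℝ) (f : (V → Bool) → ℝ) : ℝ :=
  (∑ S : V → Bool, f S * Real.exp (potential ep x j S)) / partitionFn ep x j

/-- The law of the couplings: independent Gaussians, `j_b` of mean `x_b` and variance 1. -/
def couplings {ι : Type*} [Fintype ι] (x : ι → ℝ) : Measure (ι → ℝ) :=
  Measure.pi fun b => gaussianReal (x b) 1

/-- The quenched average `[F]`. -/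
def quenched {ι : Type*} [Fintype ι] (x : ι → ℝ) (F : (ι → ℝ) → ℝ) : ℝ :=
  ∫ j, F j ∂(couplings x)

/-- The quenched pressure `P({x}) = [ln Z]`. -/
def pressure {V ι : Type*} [Fintype V] [DecidableEq V] [Fintype ι]
    (ep : ι → V × V) (x : ι → ℝ) : ℝ :=
  quenched x fun j => Real.log (partitionFn ep x j)

/-!
A spin configuration `S` acts on the couplings by `(S · j)_b = S_b j_b`. This preserves `Z`, and it
carries the law of `j` to a law whose density is the ratio of the Boltzmann factors of `S` and of
the ferromagnetic configuration. Hence the average `[⟨g (S · j)⟩]` equals `[g]` (the Nishimori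
identity).

Put `y = 0` on `C` and `y = x` elsewhere, so that `Z_y / Z_x = ⟨exp h⟩` with
`h = (y - x) ⬝ᵥ (S · j)`. Applying Jensen's inequality to the Gibbs average and to the quenched
average gives `[⟨h⟩] ≤ [ln ⟨exp h⟩] ≤ ln [⟨exp h⟩]`. By the Nishimori identity the two outer terms
are the mean and the log-Laplace transform of a linear function of independent Gaussians, and the
middle term is the difference of the two pressures, since `Z_y` does not see the couplings on `C`.
-/

open scoped Matrix

section Tilting

lemma gaussianReal_tilted_mul (μ t : ℝ) (v : NNReal) :
    (gaussianReal μ v).tilted (fun z => t * z) = gaussianReal (μ + v * t) v := by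
  refine Measure.ext_of_complexMGF_id_eq (funext fun z => ?_)
  have hmgf : ∫ y, Real.exp (t * y) ∂gaussianReal μ v = Real.exp (μ * t + v * t ^ 2 / 2) :=
    congrFun mgf_fun_id_gaussianReal t
  calc complexMGF id ((gaussianReal μ v).tilted fun y => t * y) z
      = ∫ y, Complex.exp ((t + z) * y) / Real.exp (μ * t + v * t ^ 2 / 2)
          ∂gaussianReal μ v := by
        simp only [complexMGF, integral_tilted, hmgf, id_eq, Complex.real_smul, add_mul,
          Complex.exp_add]
        push_cast
        simp only [div_mul_eq_mul_div]
    _ = complexMGF id (gaussianReal μ v) (t + z) / Real.exp (μ * t + v * t ^ 2 / 2) :=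
        integral_div _ _
    _ = complexMGF id (gaussianReal (μ + v * t) v) z := by
        rw [complexMGF_id_gaussianReal, complexMGF_id_gaussianReal, Complex.ofReal_exp,
          ← Complex.exp_sub]
        push_cast
        ring_nf

lemma pi_tilted {ι : Type*} [Fintype ι] {X : ι → Type*} [∀ i, MeasurableSpace (X i)]
    (μ : ∀ i, Measure (X i)) [∀ i, SigmaFinite (μ i)] (f : ∀ i, X i → ℝ) :
    Measure.pi (fun i => (μ i).tilted (f i)) =
      (Measure.pi μ).tilted fun x => ∑ i, f i (x i) := by
  refine Measure.pi_eq fun s _ => ?_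
  simp only [tilted_apply_eq_ofReal_integral, Measure.restrict_pi_pi, Real.exp_sum,
    integral_fintype_prod_eq_prod (𝕜 := ℝ) fun i y => Real.exp (f i y), integral_div]
  rw [← Finset.prod_div_distrib]
  exact ENNReal.ofReal_prod_of_nonneg fun i _ =>
    div_nonneg (integral_nonneg fun _ => (Real.exp_pos _).le)
      (integral_nonneg fun _ => (Real.exp_pos _).le)

end Tilting

section Couplings

variable {ι : Type*} [Fintype ι]

instance isProbabilityMeasure_couplings (m : ι → ℝ) : IsProbabilityMeasure (couplings m) := by
  unfold couplings; infer_instance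

lemma couplings_tilted_dotProduct (m a : ι → ℝ) :
    (couplings m).tilted (fun j => a ⬝ᵥ j) = couplings (m + a) := by
  simp only [couplings, dotProduct, ← pi_tilted _ fun b z => a b * z, gaussianReal_tilted_mul,
    NNReal.coe_one, one_mul, Pi.add_apply]

lemma measurePreserving_add_couplings (m d : ι → ℝ) :
    MeasurePreserving (fun j => j + d) (couplings m) (couplings (m + d)) :=
  measurePreserving_pi _ _ fun b => ⟨by fun_prop, gaussianReal_map_add_const (d b)⟩

lemma integrable_exp_dotProduct (m a : ι → ℝ) :
    Integrable (fun j => Real.exp (a ⬝ᵥ j)) (couplings m) := by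
  simp only [dotProduct, Real.exp_sum]
  exact Integrable.fintype_prod fun b => integrable_exp_mul_gaussianReal (a b)

lemma integral_exp_dotProduct (m a : ι → ℝ) :
    ∫ j, Real.exp (a ⬝ᵥ j) ∂couplings m = Real.exp (a ⬝ᵥ m + a ⬝ᵥ a / 2) := by
  have hmgf (b : ι) : ∫ z, Real.exp (a b * z) ∂gaussianReal (m b) 1 =
      Real.exp (a b * m b + a b * a b / 2) := by
    refine (congrFun mgf_fun_id_gaussianReal (a b)).trans ?_
    rw [NNReal.coe_one]
    ring_nf
  simp only [dotProduct, Real.exp_sum, couplings,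
    integral_fintype_prod_eq_prod (𝕜 := ℝ) fun b z => Real.exp (a b * z), hmgf, Finset.sum_div,
    ← Finset.sum_add_distrib]

lemma integrable_eval_couplings (m : ι → ℝ) (b : ι) :
    Integrable (fun j => j b) (couplings m) :=
  integrable_comp_eval (μ := fun b => gaussianReal (m b) 1) (f := id)
    (memLp_one_iff_integrable.mp (memLp_id_gaussianReal 1))

lemma integral_eval_couplings (m : ι → ℝ) (b : ι) : ∫ j, j b ∂couplings m = m b :=
  (integral_comp_eval (μ := fun b => gaussianReal (m b) 1) aestronglyMeasurable_id).trans
    integral_id_gaussianReal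

lemma integrable_dotProduct (m a : ι → ℝ) : Integrable (fun j => a ⬝ᵥ j) (couplings m) :=
  integrable_finsetSum _ fun b _ => (integrable_eval_couplings m b).const_mul (a b)

lemma integral_dotProduct (m a : ι → ℝ) : ∫ j, a ⬝ᵥ j ∂couplings m = a ⬝ᵥ m := by
  simp only [dotProduct, integral_finsetSum _ fun b _ =>
    (integrable_eval_couplings m b).const_mul (a b), integral_const_mul, integral_eval_couplings]

end Couplings

section Gauge

lemma spin_mul_self (s : Bool) : spin s * spin s = 1 := by
  cases s <;> simp [spin]

lemma spin_beq (s t : Bool) : spin (s == t) = spin s * spin t := by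
  cases s <;> cases t <;> simp [spin]

variable {V ι : Type*} (ep : ι → V × V) (S T : V → Bool)

lemma bondSpin_mul_self (b : ι) : bondSpin ep S b * bondSpin ep S b = 1 := by
  rw [bondSpin, mul_mul_mul_comm, spin_mul_self, spin_mul_self, one_mul]

lemma bondSpin_beq (b : ι) :
    bondSpin ep (fun v => S v == T v) b = bondSpin ep S b * bondSpin ep T b := by
  simp only [bondSpin, spin_beq, mul_mul_mul_comm]

/-- The gauge transformation `j_b ↦ S_b j_b` of the couplings by a spin configuration `S`. -/
def gaugeTransform (j : ι → ℝ) : ι → ℝ := fun b => bondSpin ep S b * j b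

lemma gaugeTransform_gaugeTransform (j : ι → ℝ) :
    gaugeTransform ep T (gaugeTransform ep S j) = gaugeTransform ep (fun v => S v == T v) j := by
  funext b
  simp only [gaugeTransform, bondSpin_beq]
  ring

lemma gaugeTransform_involutive : Function.Involutive (gaugeTransform ep S) := fun j => by
  funext b
  rw [gaugeTransform, gaugeTransform, ← mul_assoc, bondSpin_mul_self, one_mul]

lemma measurableEmbedding_gaugeTransform : MeasurableEmbedding (gaugeTransform ep S) :=
  (MeasurableEquiv.ofInvolutive _ (gaugeTransform_involutive ep S)
    (by unfold gaugeTransform; fun_prop)).measurableEmbedding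

variable [Fintype ι]

lemma gaugeTransform_dotProduct (a j : ι → ℝ) :
    gaugeTransform ep S a ⬝ᵥ j = a ⬝ᵥ gaugeTransform ep S j :=
  Finset.sum_congr rfl fun b _ => by rw [gaugeTransform, gaugeTransform]; ring

lemma potential_eq_dotProduct (x j : ι → ℝ) :
    potential ep x j S = x ⬝ᵥ gaugeTransform ep S j :=
  Finset.sum_congr rfl fun b _ => by rw [gaugeTransform]; ring

lemma measurePreserving_gaugeTransform (m : ι → ℝ) :
    MeasurePreserving (gaugeTransform ep S) (couplings m) (couplings (gaugeTransform ep S m)) := by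
  refine measurePreserving_pi _ _ fun b => ⟨by fun_prop, ?_⟩
  have hvar : NNReal.mk (bondSpin ep S b ^ 2) (sq_nonneg _) * 1 = 1 :=
    NNReal.eq (by simp [sq, bondSpin_mul_self])
  rw [gaussianReal_map_const_mul, hvar, gaugeTransform]

lemma couplings_gaugeTransform (x : ι → ℝ) :
    couplings (gaugeTransform ep S x) =
      (couplings x).tilted fun j => (gaugeTransform ep S x - x) ⬝ᵥ j := by
  rw [couplings_tilted_dotProduct, add_sub_cancel]

lemma integral_exp_gaugeTransform_sub (x : ι → ℝ) :
    ∫ j, Real.exp ((gaugeTransform ep S x - x) ⬝ᵥ j) ∂couplings x = 1 := by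
  have hnorm : gaugeTransform ep S x ⬝ᵥ gaugeTransform ep S x = x ⬝ᵥ x := by
    rw [gaugeTransform_dotProduct, gaugeTransform_involutive]
  rw [integral_exp_dotProduct, Real.exp_eq_one_iff, sub_dotProduct, sub_dotProduct,
    dotProduct_sub, dotProduct_sub, hnorm, dotProduct_comm x (gaugeTransform ep S x)]
  ring

lemma integrable_comp_gaugeTransform_iff (x : ι → ℝ) (F : (ι → ℝ) → ℝ) :
    Integrable (fun j => F (gaugeTransform ep S j)) (couplings x) ↔
      Integrable (fun j => Real.exp ((gaugeTransform ep S x - x) ⬝ᵥ j) * F j) (couplings x) := by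
  have hcomp := (measurePreserving_gaugeTransform ep S x).integrable_comp_emb
    (measurableEmbedding_gaugeTransform ep S) (g := F)
  rw [couplings_gaugeTransform, integrable_tilted_iff (integrable_exp_dotProduct _ _)] at hcomp
  exact hcomp

lemma integral_comp_gaugeTransform (x : ι → ℝ) (F : (ι → ℝ) → ℝ) :
    ∫ j, F (gaugeTransform ep S j) ∂couplings x =
      ∫ j, Real.exp ((gaugeTransform ep S x - x) ⬝ᵥ j) * F j ∂couplings x := by
  rw [(measurePreserving_gaugeTransform ep S x).integral_comp
      (measurableEmbedding_gaugeTransform ep S), couplings_gaugeTransform, integral_tilted,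
    integral_exp_gaugeTransform_sub]
  simp only [div_one, smul_eq_mul]

end Gauge

section Gibbs

variable {V ι : Type*} [Fintype V] [DecidableEq V] [Fintype ι] (ep : ι → V × V)

lemma partitionFn_pos (x j : ι → ℝ) : 0 < partitionFn ep x j :=
  Finset.sum_pos (fun _ _ => Real.exp_pos _) Finset.univ_nonempty

lemma partitionFn_gaugeTransform (x j : ι → ℝ) (S : V → Bool) :
    partitionFn ep x (gaugeTransform ep S j) = partitionFn ep x j := by
  have hinv : Function.Involutive fun (T : V → Bool) v => S v == T v := fun T => by
    funext v
    change (S v == (S v == T v)) = T v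
    cases S v <;> cases T v <;> rfl
  refine Fintype.sum_equiv hinv.toPerm _ _ fun T => ?_
  rw [potential_eq_dotProduct, potential_eq_dotProduct, gaugeTransform_gaugeTransform,
    Function.Involutive.coe_toPerm]

/-- The Boltzmann–Gibbs probability `exp U(j, S) / Z(j)` of the configuration `S`. -/
def gibbsWeight (x j : ι → ℝ) (S : V → Bool) : ℝ :=
  Real.exp (potential ep x j S) / partitionFn ep x j

lemma gibbsWeight_nonneg (x j : ι → ℝ) (S : V → Bool) : 0 ≤ gibbsWeight ep x j S :=
  div_nonneg (Real.exp_pos _).le (partitionFn_pos ep x j).le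

lemma sum_gibbsWeight (x j : ι → ℝ) : ∑ S, gibbsWeight ep x j S = 1 := by
  simp only [gibbsWeight, ← Finset.sum_div]
  exact div_self (partitionFn_pos ep x j).ne'

lemma gibbsWeight_le_one (x j : ι → ℝ) (S : V → Bool) : gibbsWeight ep x j S ≤ 1 :=
  (Finset.single_le_sum (fun T _ => gibbsWeight_nonneg ep x j T) (Finset.mem_univ S)).trans_eq
    (sum_gibbsWeight ep x j)

lemma gibbs_eq_sum (x j : ι → ℝ) (f : (V → Bool) → ℝ) :
    gibbs ep x j f = ∑ S, gibbsWeight ep x j S * f S := by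
  simp only [gibbs, gibbsWeight, Finset.sum_div, div_mul_eq_mul_div, mul_comm (f _)]

lemma exp_gibbs_le (x j : ι → ℝ) (f : (V → Bool) → ℝ) :
    Real.exp (gibbs ep x j f) ≤ gibbs ep x j fun S => Real.exp (f S) := by
  simp only [gibbs_eq_sum]
  exact convexOn_exp.map_sum_le (fun S _ => gibbsWeight_nonneg ep x j S) (sum_gibbsWeight ep x j)
    fun _ _ => Set.mem_univ _

lemma gibbs_exp_dotProduct_sub (x y j : ι → ℝ) :
    (gibbs ep x j fun S => Real.exp ((y - x) ⬝ᵥ gaugeTransform ep S j)) =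
      partitionFn ep y j / partitionFn ep x j := by
  refine congrArg (· / partitionFn ep x j) (Finset.sum_congr rfl fun S _ => ?_)
  rw [potential_eq_dotProduct, potential_eq_dotProduct, ← Real.exp_add, sub_dotProduct,
    sub_add_cancel]

lemma measurable_partitionFn (x : ι → ℝ) : Measurable (partitionFn ep x) := by
  unfold partitionFn potential
  fun_prop

lemma measurable_gibbsWeight (x : ι → ℝ) (S : V → Bool) :
    Measurable fun j => gibbsWeight ep x j S := by
  unfold gibbsWeight partitionFn potential
  fun_prop

end Gibbs

section Nishimori

variable {V ι : Type*} [Fintype V] [DecidableEq V] [Fintype ι] (ep : ι → V × V)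

lemma exp_mul_gibbsWeight_gaugeTransform (x j : ι → ℝ) (S : V → Bool) :
    Real.exp ((gaugeTransform ep S x - x) ⬝ᵥ j) *
      gibbsWeight ep x (gaugeTransform ep S j) S = gibbsWeight ep x j S := by
  rw [gibbsWeight, gibbsWeight, partitionFn_gaugeTransform, potential_eq_dotProduct,
    potential_eq_dotProduct, gaugeTransform_involutive, mul_div_assoc', ← Real.exp_add,
    sub_dotProduct, sub_add_cancel, gaugeTransform_dotProduct]

variable {x : ι → ℝ} {g : (ι → ℝ) → ℝ}

lemma integrable_gibbsWeight_mul (hg : Integrable g (couplings x)) (S : V → Bool) :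
    Integrable (fun j => gibbsWeight ep x j S * g j) (couplings x) :=
  hg.bdd_mul (measurable_gibbsWeight ep x S).aestronglyMeasurable (c := 1)
    (ae_of_all _ fun j => by
      rw [Real.norm_of_nonneg (gibbsWeight_nonneg ep x j S)]
      exact gibbsWeight_le_one ep x j S)

lemma integrable_gibbsWeight_mul_comp_gaugeTransform (hg : Integrable g (couplings x))
    (S : V → Bool) :
    Integrable (fun j => gibbsWeight ep x j S * g (gaugeTransform ep S j)) (couplings x) := by
  have h := (integrable_comp_gaugeTransform_iff ep S x
    fun j => gibbsWeight ep x (gaugeTransform ep S j) S * g j).mpr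
  simp only [← mul_assoc, exp_mul_gibbsWeight_gaugeTransform, gaugeTransform_involutive ep S _] at h
  exact h (integrable_gibbsWeight_mul ep hg S)

lemma integral_gibbsWeight_mul_comp_gaugeTransform (x : ι → ℝ) (g : (ι → ℝ) → ℝ)
    (S : V → Bool) :
    ∫ j, gibbsWeight ep x j S * g (gaugeTransform ep S j) ∂couplings x =
      ∫ j, gibbsWeight ep x j S * g j ∂couplings x := by
  have h := integral_comp_gaugeTransform ep S x
    fun j => gibbsWeight ep x (gaugeTransform ep S j) S * g j
  simpa only [← mul_assoc, exp_mul_gibbsWeight_gaugeTransform,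
    gaugeTransform_involutive ep S _] using h

lemma integrable_gibbs_comp_gaugeTransform (hg : Integrable g (couplings x)) :
    Integrable (fun j => gibbs ep x j fun S => g (gaugeTransform ep S j)) (couplings x) := by
  simp only [gibbs_eq_sum]
  exact integrable_finsetSum _ fun S _ => integrable_gibbsWeight_mul_comp_gaugeTransform ep hg S

/-- The Nishimori identity; a gauge-invariant function of couplings and spins is encoded by its
restriction `g` to the ferromagnetic configuration. -/
theorem quenched_gibbs_comp_gaugeTransform (hg : Integrable g (couplings x)) :
    (quenched x fun j => gibbs ep x j fun S => g (gaugeTransform ep S j)) = quenched x g := by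
  calc (quenched x fun j => gibbs ep x j fun S => g (gaugeTransform ep S j))
      = ∑ S, ∫ j, gibbsWeight ep x j S * g (gaugeTransform ep S j) ∂couplings x := by
        simp only [quenched, gibbs_eq_sum]
        exact integral_finsetSum _ fun S _ =>
          integrable_gibbsWeight_mul_comp_gaugeTransform ep hg S
    _ = ∑ S, ∫ j, gibbsWeight ep x j S * g j ∂couplings x := by
        simp only [integral_gibbsWeight_mul_comp_gaugeTransform]
    _ = ∫ j, ∑ S, gibbsWeight ep x j S * g j ∂couplings x :=
        (integral_finsetSum _ fun S _ => integrable_gibbsWeight_mul ep hg S).symm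
    _ = quenched x g := by
        simp only [← Finset.sum_mul, sum_gibbsWeight, one_mul, quenched]

end Nishimori

section Pressure

variable {V ι : Type*} [Fintype V] [DecidableEq V] [Fintype ι] (ep : ι → V × V)

lemma integrable_partitionFn (m x : ι → ℝ) : Integrable (partitionFn ep x) (couplings m) := by
  unfold partitionFn
  simp only [potential_eq_dotProduct, ← gaugeTransform_dotProduct]
  exact integrable_finsetSum _ fun S _ => integrable_exp_dotProduct m _

lemma potential_le_log_partitionFn (x j : ι → ℝ) (S : V → Bool) :
    potential ep x j S ≤ Real.log (partitionFn ep x j) :=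
  (Real.le_log_iff_exp_le (partitionFn_pos ep x j)).mpr
    (Finset.single_le_sum (f := fun S => Real.exp (potential ep x j S))
      (fun _ _ => (Real.exp_pos _).le) (Finset.mem_univ S))

lemma integrable_log_partitionFn (m x : ι → ℝ) :
    Integrable (fun j => Real.log (partitionFn ep x j)) (couplings m) := by
  refine integrable_of_le_of_le (measurable_partitionFn ep x).log.aestronglyMeasurable
    (ae_of_all _ fun j => potential_le_log_partitionFn ep x j fun _ => true)
    (ae_of_all _ fun j => Real.log_le_self (partitionFn_pos ep x j).le)
    ?_ (integrable_partitionFn ep m x)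
  simp only [potential_eq_dotProduct, ← gaugeTransform_dotProduct]
  exact integrable_dotProduct m _

lemma integrable_log_partitionFn_div (m x y : ι → ℝ) :
    Integrable (fun j => Real.log (partitionFn ep y j / partitionFn ep x j)) (couplings m) := by
  simp only [Real.log_div (partitionFn_pos ep _ _).ne' (partitionFn_pos ep _ _).ne']
  exact (integrable_log_partitionFn ep m y).sub (integrable_log_partitionFn ep m x)

lemma quenched_log_partitionFn_div (x y : ι → ℝ) :
    (quenched x fun j => Real.log (partitionFn ep y j / partitionFn ep x j)) =
      (quenched x fun j => Real.log (partitionFn ep y j)) - pressure ep x := by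
  simp only [Real.log_div (partitionFn_pos ep _ _).ne' (partitionFn_pos ep _ _).ne']
  exact integral_sub (integrable_log_partitionFn ep x y) (integrable_log_partitionFn ep x x)

theorem dotProduct_le_quenched_log_partitionFn_sub_pressure (x y : ι → ℝ) :
    (y - x) ⬝ᵥ x ≤ (quenched x fun j => Real.log (partitionFn ep y j)) - pressure ep x := by
  have hlin := integrable_dotProduct x (y - x)
  rw [← integral_dotProduct, ← quenched, ← quenched_gibbs_comp_gaugeTransform ep hlin,
    ← quenched_log_partitionFn_div]
  refine integral_mono (integrable_gibbs_comp_gaugeTransform ep hlin)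
    (integrable_log_partitionFn_div ep x x y) fun j => ?_
  refine (Real.le_log_iff_exp_le ?_).mpr ?_
  · exact div_pos (partitionFn_pos ep y j) (partitionFn_pos ep x j)
  · exact (exp_gibbs_le ep x j _).trans_eq (gibbs_exp_dotProduct_sub ep x y j)

theorem quenched_log_partitionFn_sub_pressure_le (x y : ι → ℝ) :
    (quenched x fun j => Real.log (partitionFn ep y j)) - pressure ep x ≤
      (y - x) ⬝ᵥ x + (y - x) ⬝ᵥ (y - x) / 2 := by
  have hexp := integrable_exp_dotProduct x (y - x)
  have hratio := integrable_gibbs_comp_gaugeTransform ep hexp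
  have hmean := quenched_gibbs_comp_gaugeTransform ep hexp
  simp only [gibbs_exp_dotProduct_sub] at hratio hmean
  have hexp_log (j : ι → ℝ) : Real.exp (Real.log (partitionFn ep y j / partitionFn ep x j)) =
      partitionFn ep y j / partitionFn ep x j :=
    Real.exp_log (div_pos (partitionFn_pos ep y j) (partitionFn_pos ep x j))
  rw [← quenched_log_partitionFn_div, ← Real.exp_le_exp, ← integral_exp_dotProduct, ← quenched,
    ← hmean]
  simpa only [hexp_log, quenched] using
    convexOn_exp.map_integral_le Real.continuous_exp.continuousOn isClosed_univ
      (ae_of_all _ fun _ => Set.mem_univ _) (integrable_log_partitionFn_div ep x x y)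
      (hratio.congr (ae_of_all _ fun j => (hexp_log j).symm))

lemma partitionFn_add {y d : ι → ℝ} (hd : ∀ b, y b = 0 ∨ d b = 0) (j : ι → ℝ) :
    partitionFn ep y (j + d) = partitionFn ep y j := by
  refine Finset.sum_congr rfl fun S _ => congrArg Real.exp (Finset.sum_congr rfl fun b _ => ?_)
  rcases hd b with h | h <;> simp [h]

lemma quenched_log_partitionFn_eq_pressure {x y : ι → ℝ} (hxy : ∀ b, y b = 0 ∨ y b = x b) :
    (quenched x fun j => Real.log (partitionFn ep y j)) = pressure ep y := by
  have hshift := measurePreserving_add_couplings y (x - y)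
  rw [add_sub_cancel] at hshift
  have hinv (j : ι → ℝ) : partitionFn ep y (j + (x - y)) = partitionFn ep y j :=
    partitionFn_add ep (fun b => (hxy b).imp_right fun h => by simp [h]) j
  rw [quenched, ← hshift.map_eq, integral_map hshift.aemeasurable
    (measurable_partitionFn ep y).log.aestronglyMeasurable]
  simp only [hinv, pressure, quenched]

end Pressure

theorem corridor_term_surface_bounds_general
    {V ι : Type*} [Fintype V] [DecidableEq V] [Fintype ι] [DecidableEq ι]
    (ep : ι → V × V) (x : ι → ℝ) (C : Finset ι) :
    ∑ b ∈ C, x b ^ 2 / 2 ≤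
        pressure ep x - pressure ep (fun b => if b ∈ C then 0 else x b) ∧
      pressure ep x - pressure ep (fun b => if b ∈ C then 0 else x b) ≤
        ∑ b ∈ C, x b ^ 2 := by
  set y : ι → ℝ := fun b => if b ∈ C then 0 else x b with hy
  have hP : (quenched x fun j => Real.log (partitionFn ep y j)) = pressure ep y :=
    quenched_log_partitionFn_eq_pressure ep fun b => ite_eq_or_eq _ _ _
  have hlower := dotProduct_le_quenched_log_partitionFn_sub_pressure ep x y
  have hupper := quenched_log_partitionFn_sub_pressure_le ep x y
  have hsub : y - x = fun b => if b ∈ C then -x b else 0 := by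
    funext b
    by_cases hb : b ∈ C <;> simp [hy, hb]
  have hlin : (y - x) ⬝ᵥ x = -∑ b ∈ C, x b ^ 2 := by
    rw [hsub]
    simp [dotProduct, ite_mul, Finset.sum_ite_mem, sq]
  have hquad : (y - x) ⬝ᵥ (y - x) = ∑ b ∈ C, x b ^ 2 := by
    rw [hsub]
    simp [dotProduct, Finset.sum_ite_mem, sq]
  rw [← Finset.sum_div]
  constructor <;> linarith

/-- Surface-order bounds for the corridor term: with all parameters equal
to `x` on the bond set `B`, and `P_{B∖C}` the pressure with the corridor bonds removed
(equivalently `x_b = 0` on `C`),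
`(x²/2)|C| ≤ P_B − P_{B∖C} ≤ x²|C|`. -/
theorem corridor_term_surface_bounds
    {V ι : Type*} [Fintype V] [DecidableEq V] [Fintype ι] [DecidableEq ι]
    (ep : ι → V × V) (hep : ∀ b, (ep b).1 ≠ (ep b).2)
    (x : ℝ) (hx : 0 < x) (C : Finset ι) :
    x ^ 2 / 2 * (C.card : ℝ) ≤
        pressure ep (fun _ => x) - pressure ep (fun b => if b ∈ C then 0 else x) ∧
      pressure ep (fun _ => x) - pressure ep (fun b => if b ∈ C then 0 else x) ≤
        x ^ 2 * (C.card : ℝ) := by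
  simpa only [Finset.sum_const, nsmul_eq_mul, mul_comm] using
    corridor_term_surface_bounds_general ep (fun _ => x) C

end
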